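/- For every b ∈ [0, 1/2], the A-effective energy 𝓔_b is non-increasing on [R₀,∞); in particular 𝓔_b(R) ≤ 𝓔_b(R₀) for all R ≥ R₀. -/

import Mathlib

open Real MeasureTheory Set

/-- Partial derivative with respect to the first (time) variable `R`. -/
noncomputable def pdR (f : ℝ → ℝ → ℝ) (R θ : ℝ) : ℝ := deriv (fun r => f r θ) R

/-- Partial derivative with respect to the second (space) variable `θ`. -/
noncomputable def pdT (f : ℝ → ℝ → ℝ) (R θ : ℝ) : ℝ := deriv (fun t => f R t) θ

lemma aux_pdR_has {f : ℝ → ℝ → ℝ} (hf : ContDiff ℝ (⊤ : ℕ∞) (Function.uncurry f)) (R θ : ℝ) :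
    HasDerivAt (fun r => f r θ) (fderiv ℝ (Function.uncurry f) (R, θ) (1, 0)) R := by
  have h1 : HasFDerivAt (Function.uncurry f) (fderiv ℝ (Function.uncurry f) (R, θ)) (R, θ) :=
    (hf.differentiable (by simp) (R, θ)).hasFDerivAt
  have h2 : HasDerivAt (fun r : ℝ => (r, θ)) ((1 : ℝ), (0 : ℝ)) R :=
    (hasDerivAt_id R).prodMk (hasDerivAt_const R θ)
  exact h1.comp_hasDerivAt R h2

lemma aux_pdT_has {f : ℝ → ℝ → ℝ} (hf : ContDiff ℝ (⊤ : ℕ∞) (Function.uncurry f)) (R θ : ℝ) :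
    HasDerivAt (fun t => f R t) (fderiv ℝ (Function.uncurry f) (R, θ) (0, 1)) θ := by
  have h1 : HasFDerivAt (Function.uncurry f) (fderiv ℝ (Function.uncurry f) (R, θ)) (R, θ) :=
    (hf.differentiable (by simp) (R, θ)).hasFDerivAt
  have h2 : HasDerivAt (fun t : ℝ => (R, t)) ((0 : ℝ), (1 : ℝ)) θ :=
    (hasDerivAt_const θ R).prodMk (hasDerivAt_id θ)
  exact h1.comp_hasDerivAt θ h2

lemma pdR_has {f : ℝ → ℝ → ℝ} (hf : ContDiff ℝ (⊤ : ℕ∞) (Function.uncurry f)) (R θ : ℝ) :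
    HasDerivAt (fun r => f r θ) (pdR f R θ) R :=
  (aux_pdR_has hf R θ).differentiableAt.hasDerivAt

lemma pdT_has {f : ℝ → ℝ → ℝ} (hf : ContDiff ℝ (⊤ : ℕ∞) (Function.uncurry f)) (R θ : ℝ) :
    HasDerivAt (fun t => f R t) (pdT f R θ) θ :=
  (aux_pdT_has hf R θ).differentiableAt.hasDerivAt

lemma pdR_eq {f : ℝ → ℝ → ℝ} (hf : ContDiff ℝ (⊤ : ℕ∞) (Function.uncurry f)) :
    Function.uncurry (pdR f) = fun p => fderiv ℝ (Function.uncurry f) p (1, 0) := by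
  funext ⟨R, θ⟩
  exact (aux_pdR_has hf R θ).deriv

lemma pdT_eq {f : ℝ → ℝ → ℝ} (hf : ContDiff ℝ (⊤ : ℕ∞) (Function.uncurry f)) :
    Function.uncurry (pdT f) = fun p => fderiv ℝ (Function.uncurry f) p (0, 1) := by
  funext ⟨R, θ⟩
  exact (aux_pdT_has hf R θ).deriv

lemma pdR_smooth {f : ℝ → ℝ → ℝ} (hf : ContDiff ℝ (⊤ : ℕ∞) (Function.uncurry f)) :
    ContDiff ℝ (⊤ : ℕ∞) (Function.uncurry (pdR f)) := by
  rw [pdR_eq hf]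
  exact (hf.fderiv_right (m := (⊤ : ℕ∞)) (by simp)).clm_apply contDiff_const

lemma pdT_smooth {f : ℝ → ℝ → ℝ} (hf : ContDiff ℝ (⊤ : ℕ∞) (Function.uncurry f)) :
    ContDiff ℝ (⊤ : ℕ∞) (Function.uncurry (pdT f)) := by
  rw [pdT_eq hf]
  exact (hf.fderiv_right (m := (⊤ : ℕ∞)) (by simp)).clm_apply contDiff_const

lemma pd_symm {f : ℝ → ℝ → ℝ} (hf : ContDiff ℝ (⊤ : ℕ∞) (Function.uncurry f)) (R θ : ℝ) :
    pdR (pdT f) R θ = pdT (pdR f) R θ := by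
  have e1 := congrFun (pdR_eq (pdT_smooth hf)) (R, θ)
  have e2 := congrFun (pdT_eq (pdR_smooth hf)) (R, θ)
  simp only [Function.uncurry_apply_pair] at e1 e2
  rw [e1, e2, pdT_eq hf, pdR_eq hf]
  have hd : DifferentiableAt ℝ (fderiv ℝ (Function.uncurry f)) (R, θ) :=
    (hf.fderiv_right (m := (⊤ : ℕ∞)) (by simp)).differentiable (by simp) (R, θ)
  have hs : IsSymmSndFDerivAt ℝ (Function.uncurry f) (R, θ) :=
    hf.contDiffAt.isSymmSndFDerivAt (by
      rw [minSmoothness_of_isRCLikeNormedField]; exact WithTop.coe_le_coe.mpr (le_top : (2 : ℕ∞) ≤ ⊤))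
  rw [fderiv_clm_apply hd (differentiableAt_const _), fderiv_clm_apply hd (differentiableAt_const _)]
  simpa using hs (1, 0) (0, 1)

lemma pdR_per {f : ℝ → ℝ → ℝ} (h : ∀ R θ, f R (θ + 2 * π) = f R θ) (R θ : ℝ) :
    pdR f R (θ + 2 * π) = pdR f R θ := by
  simp only [pdR, h]

lemma pdT_per {f : ℝ → ℝ → ℝ} (h : ∀ R θ, f R (θ + 2 * π) = f R θ) (R θ : ℝ) :
    pdT f R (θ + 2 * π) = pdT f R θ := by
  have := deriv_comp_add_const (fun t => f R t) (2 * π) θ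
  simp only [h] at this
  simp only [pdT]
  exact this.symm

lemma anti_of_param (R₀ : ℝ) (hR₀ : 0 < R₀) (g gR : ℝ → ℝ → ℝ)
    (hd : ∀ R, 0 < R → ∀ θ, HasDerivAt (fun r => g r θ) (gR R θ) R)
    (hg : ∀ R, 0 < R → Continuous (g R))
    (hc : ContinuousOn (Function.uncurry gR) (Set.Ioi 0 ×ˢ Set.univ))
    (hn : ∀ R, R₀ ≤ R → ∫ θ in (0:ℝ)..(2 * π), gR R θ ≤ 0) :
    AntitoneOn (fun R => ∫ θ in (0:ℝ)..(2 * π), g R θ) (Set.Ici R₀) := by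
  have key : ∀ R, 0 < R → HasDerivAt (fun R => ∫ θ in (0:ℝ)..(2 * π), g R θ)
      (∫ θ in (0:ℝ)..(2 * π), gR R θ) R := by
    intro R hR
    have hK : IsCompact (Set.Icc (R / 2) (2 * R) ×ˢ Set.uIcc 0 (2 * π)) :=
      isCompact_Icc.prod isCompact_uIcc
    obtain ⟨C, hC⟩ := hK.exists_bound_of_continuousOn (hc.mono (by
      rintro ⟨r, t⟩ ⟨h1, -⟩
      exact ⟨lt_of_lt_of_le (by positivity) h1.1, trivial⟩))
    have hpos : ∀ᶠ r in nhds R, 0 < r := lt_mem_nhds hR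
    have hcR : Continuous (gR R) := by
      have : ContinuousOn (fun t => Function.uncurry gR (R, t)) Set.univ :=
        hc.comp (by fun_prop) (fun t _ => ⟨hR, trivial⟩)
      exact continuousOn_univ.mp this
    refine (intervalIntegral.hasDerivAt_integral_of_dominated_loc_of_deriv_le
      (s := Set.Icc (R / 2) (2 * R)) (bound := fun _ => C)
      (Icc_mem_nhds (by linarith) (by linarith)) ?_ ?_ ?_ ?_ ?_ ?_).2
    · filter_upwards [hpos] with r hr
      exact (hg r hr).aestronglyMeasurable
    · exact (hg R hR).intervalIntegrable _ _
    · exact hcR.aestronglyMeasurable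
    · refine Filter.Eventually.of_forall fun t ht r hr => ?_
      exact hC (r, t) ⟨hr, Set.uIoc_subset_uIcc ht⟩
    · exact intervalIntegrable_const
    · refine Filter.Eventually.of_forall fun t ht r hr => ?_
      exact hd r (lt_of_lt_of_le (by positivity) hr.1) t
  refine antitoneOn_of_deriv_nonpos (convex_Ici R₀) ?_ ?_ ?_
  · intro R hR
    exact (key R (lt_of_lt_of_le hR₀ hR)).continuousAt.continuousWithinAt
  · intro R hR
    rw [interior_Ici] at hR
    exact (key R (hR₀.trans hR)).differentiableAt.differentiableWithinAt
  · intro R hR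
    rw [interior_Ici] at hR
    rw [(key R (hR₀.trans hR)).deriv]
    exact hn R (le_of_lt hR)

theorem stmt5
    (R₀ : ℝ) (hR₀ : 0 < R₀)
    (U A : ℝ → ℝ → ℝ)
    (hU : ContDiff ℝ (⊤ : ℕ∞) (Function.uncurry U))
    (hA : ContDiff ℝ (⊤ : ℕ∞) (Function.uncurry A))
    (hUper : ∀ R θ, U R (θ + 2 * π) = U R θ)
    (hAper : ∀ R θ, A R (θ + 2 * π) = A R θ)
    (eqU : ∀ R, R₀ ≤ R → ∀ θ : ℝ,
      deriv (fun r => r * pdR U r θ) R - deriv (fun t => R * pdT U R t) θ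
        = exp (4 * U R θ) / (2 * R) * ((pdR A R θ) ^ 2 - (pdT A R θ) ^ 2))
    (eqA : ∀ R, R₀ ≤ R → ∀ θ : ℝ,
      deriv (fun r => r⁻¹ * pdR A r θ) R - deriv (fun t => R⁻¹ * pdT A R t) θ
        = 4 / R * (-(pdR U R θ * pdR A R θ) + pdT U R θ * pdT A R θ))
    (Eb : ℝ → ℝ → ℝ)
    (hEb : ∀ b R, Eb b R = ∫ θ in (0:ℝ)..(2 * π),
      (pdR U R θ - b / R) ^ 2 + (pdT U R θ) ^ 2
        + exp (4 * U R θ) / (4 * R ^ 2) * ((pdR A R θ) ^ 2 + (pdT A R θ) ^ 2))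
 :
    ∀ b ∈ Set.Icc (0:ℝ) (1/2),
      AntitoneOn (Eb b) (Set.Ici R₀) ∧ ∀ R, R₀ ≤ R → Eb b R ≤ Eb b R₀ := by
  intro b hb
  have hUR := pdR_smooth hU
  have hUT := pdT_smooth hU
  have hAR := pdR_smooth hA
  have hAT := pdT_smooth hA
  have hURR := (pdR_smooth hUR).continuous
  have hUTR := (pdR_smooth hUT).continuous
  have hARR := (pdR_smooth hAR).continuous
  have hATR := (pdR_smooth hAT).continuous
  have anti : AntitoneOn (Eb b) (Set.Ici R₀) := by
    have hfun : Eb b = fun R => ∫ θ in (0:ℝ)..(2 * π),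
      ((pdR U R θ - b / R) ^ 2 + (pdT U R θ) ^ 2
        + exp (4 * U R θ) / (4 * R ^ 2) * ((pdR A R θ) ^ 2 + (pdT A R θ) ^ 2)) :=
      funext (hEb b)
    rw [hfun]
    refine anti_of_param R₀ hR₀ _ (fun R θ =>
      2 * (pdR U R θ - b / R) * (pdR (pdR U) R θ + b / R ^ 2) + 2 * pdT U R θ * pdR (pdT U) R θ
      + (exp (4 * U R θ) / (4 * R ^ 2) * (4 * pdR U R θ - 2 / R)
          * ((pdR A R θ) ^ 2 + (pdT A R θ) ^ 2)
        + exp (4 * U R θ) / (4 * R ^ 2) * (2 * pdR A R θ * pdR (pdR A) R θ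
          + 2 * pdT A R θ * pdR (pdT A) R θ))) ?_ ?_ ?_ ?_
    · intro R hR θ
      have hR' : R ≠ 0 := hR.ne'
      have d1 := ((pdR_has hUR R θ).sub ((hasDerivAt_const R b).div (hasDerivAt_id R) hR')).pow 2
      have d2 := (pdR_has hUT R θ).pow 2
      have d3 := (((pdR_has hU R θ).const_mul 4).exp).div
        (((hasDerivAt_id R).pow 2).const_mul 4) (by simpa using hR')
      have d4 := ((pdR_has hAR R θ).pow 2).add ((pdR_has hAT R θ).pow 2)
      refine HasDerivAt.congr_deriv ((d1.add d2).add (d3.mul d4)) ?_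
      simp
      field_simp
      ring
    · intro R hR
      have c0 : Continuous (U R) := hU.continuous.comp (by fun_prop : Continuous fun t : ℝ => (R, t))
      have c1 : Continuous (pdR U R) := hUR.continuous.comp (by fun_prop : Continuous fun t : ℝ => (R, t))
      have c2 : Continuous (pdT U R) := hUT.continuous.comp (by fun_prop : Continuous fun t : ℝ => (R, t))
      have c3 : Continuous (pdR A R) := hAR.continuous.comp (by fun_prop : Continuous fun t : ℝ => (R, t))
      have c4 : Continuous (pdT A R) := hAT.continuous.comp (by fun_prop : Continuous fun t : ℝ => (R, t))
      fun_prop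
    · have c0 := hU.continuous
      have c1 := hUR.continuous
      have c2 := hUT.continuous
      have c3 := hAR.continuous
      have c4 := hAT.continuous
      rintro ⟨R, θ⟩ ⟨hR, -⟩
      have hR' : R ≠ 0 := (show (0:ℝ) < R from hR).ne'
      have hR2 : 4 * R ^ 2 ≠ 0 := by positivity
      have hR3 : R ^ 2 ≠ 0 := by positivity
      apply ContinuousAt.continuousWithinAt
      change ContinuousAt (fun p : ℝ × ℝ => 
        2 * (Function.uncurry (pdR U) p - b / p.1) * (Function.uncurry (pdR (pdR U)) p + b / p.1 ^ 2)
          + 2 * Function.uncurry (pdT U) p * Function.uncurry (pdR (pdT U)) p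
        + (exp (4 * Function.uncurry U p) / (4 * p.1 ^ 2) * (4 * Function.uncurry (pdR U) p - 2 / p.1)
          * ((Function.uncurry (pdR A) p) ^ 2 + (Function.uncurry (pdT A) p) ^ 2)
        + exp (4 * Function.uncurry U p) / (4 * p.1 ^ 2)
          * (2 * Function.uncurry (pdR A) p * Function.uncurry (pdR (pdR A)) p
          + 2 * Function.uncurry (pdT A) p * Function.uncurry (pdR (pdT A)) p))) (R, θ)
      fun_prop (disch := assumption)
    · intro R hR
      have hRpos : 0 < R := lt_of_lt_of_le hR₀ hR
      have hR' : R ≠ 0 := hRpos.ne'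
      -- flux term
      set Φ : ℝ → ℝ := fun θ => 2 * (pdR U R θ - b / R) * pdT U R θ
        + exp (4 * U R θ) / (4 * R ^ 2) * (2 * (pdR A R θ * pdT A R θ)) with hΦ
      set Φ' : ℝ → ℝ := fun θ => 2 * (pdT (pdR U) R θ * pdT U R θ
          + (pdR U R θ - b / R) * pdT (pdT U) R θ)
        + (exp (4 * U R θ) / (4 * R ^ 2) * (4 * pdT U R θ) * (2 * (pdR A R θ * pdT A R θ))
        + exp (4 * U R θ) / (4 * R ^ 2) * (2 * (pdT (pdR A) R θ * pdT A R θ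
          + pdR A R θ * pdT (pdT A) R θ))) with hΦ'
      have hder : ∀ θ, HasDerivAt Φ (Φ' θ) θ := by
        intro θ
        have d1 := (((pdT_has hUR R θ).sub_const (b / R)).const_mul 2).mul (pdT_has hUT R θ)
        have d3 := (((pdT_has hU R θ).const_mul 4).exp).div_const (4 * R ^ 2)
        have d4 := ((pdT_has hAR R θ).mul (pdT_has hAT R θ)).const_mul 2
        refine HasDerivAt.congr_deriv (d1.add (d3.mul d4)) ?_
        simp [hΦ']
        ring
      have c0 : Continuous (U R) := hU.continuous.comp (by fun_prop : Continuous fun t : ℝ => (R, t))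
      have c1 : Continuous (pdR U R) := hUR.continuous.comp (by fun_prop : Continuous fun t : ℝ => (R, t))
      have c2 : Continuous (pdT U R) := hUT.continuous.comp (by fun_prop : Continuous fun t : ℝ => (R, t))
      have c3 : Continuous (pdR A R) := hAR.continuous.comp (by fun_prop : Continuous fun t : ℝ => (R, t))
      have c4 : Continuous (pdT A R) := hAT.continuous.comp (by fun_prop : Continuous fun t : ℝ => (R, t))
      have c5 : Continuous (pdT (pdR U) R) :=
        (pdT_smooth hUR).continuous.comp (by fun_prop : Continuous fun t : ℝ => (R, t))
      have c6 : Continuous (pdT (pdT U) R) :=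
        (pdT_smooth hUT).continuous.comp (by fun_prop : Continuous fun t : ℝ => (R, t))
      have c7 : Continuous (pdT (pdR A) R) :=
        (pdT_smooth hAR).continuous.comp (by fun_prop : Continuous fun t : ℝ => (R, t))
      have c8 : Continuous (pdT (pdT A) R) :=
        (pdT_smooth hAT).continuous.comp (by fun_prop : Continuous fun t : ℝ => (R, t))
      have cΦ' : Continuous Φ' := by rw [hΦ']; fun_prop
      have hint : ∫ θ in (0:ℝ)..(2 * π), Φ' θ = 0 := by
        rw [intervalIntegral.integral_eq_sub_of_hasDerivAt (fun θ _ => hder θ)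
          (cΦ'.intervalIntegrable _ _)]
        have e1 := pdR_per hUper R 0
        have e2 := pdT_per hUper R 0
        have e3 := pdR_per hAper R 0
        have e4 := pdT_per hAper R 0
        have e5 := hUper R 0
        rw [zero_add] at e1 e2 e3 e4 e5
        simp only [hΦ, e1, e2, e3, e4, e5, sub_self]
      set N : ℝ → ℝ := fun θ => -(2 * (pdR U R θ - b / R) ^ 2 / R
        + exp (4 * U R θ) / (4 * R ^ 3) * (4 * b * (pdR A R θ) ^ 2
          + (2 - 4 * b) * (pdT A R θ) ^ 2)) with hN
      have cN : Continuous N := by rw [hN]; fun_prop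
      have hNle : ∀ θ, N θ ≤ 0 := by
        intro θ
        have h1 : 0 ≤ b := hb.1
        have h2 : 0 ≤ 2 - 4 * b := by linarith [hb.2]
        simp only [hN]
        exact neg_nonpos.mpr (by positivity)
      have heq : ∀ θ, 2 * (pdR U R θ - b / R) * (pdR (pdR U) R θ + b / R ^ 2)
          + 2 * pdT U R θ * pdR (pdT U) R θ
          + (exp (4 * U R θ) / (4 * R ^ 2) * (4 * pdR U R θ - 2 / R)
              * ((pdR A R θ) ^ 2 + (pdT A R θ) ^ 2)
            + exp (4 * U R θ) / (4 * R ^ 2) * (2 * pdR A R θ * pdR (pdR A) R θ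
              + 2 * pdT A R θ * pdR (pdT A) R θ)) = Φ' θ + N θ := by
        intro θ
        have q1 := eqU R hR θ
        have q2 := eqA R hR θ
        have a1 : deriv (fun r => r * pdR U r θ) R = pdR U R θ + R * pdR (pdR U) R θ := by
          refine HasDerivAt.deriv (((hasDerivAt_id R).mul (pdR_has hUR R θ)).congr_deriv ?_)
          simp
        have a2 : deriv (fun t => R * pdT U R t) θ = R * pdT (pdT U) R θ :=
          ((pdT_has hUT R θ).const_mul R).deriv
        have a3 : deriv (fun r => r⁻¹ * pdR A r θ) R
            = -(R ^ 2)⁻¹ * pdR A R θ + R⁻¹ * pdR (pdR A) R θ :=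
          ((hasDerivAt_inv hR').mul (pdR_has hAR R θ)).deriv
        have a4 : deriv (fun t => R⁻¹ * pdT A R t) θ = R⁻¹ * pdT (pdT A) R θ :=
          ((pdT_has hAT R θ).const_mul R⁻¹).deriv
        rw [a1, a2] at q1
        rw [a3, a4] at q2
        have s1 : pdR (pdR U) R θ = pdT (pdT U) R θ - pdR U R θ / R
            + exp (4 * U R θ) / (2 * R ^ 2) * ((pdR A R θ) ^ 2 - (pdT A R θ) ^ 2) := by
          field_simp at q1 ⊢
          linarith
        have s2 : pdR (pdR A) R θ = pdT (pdT A) R θ + pdR A R θ / R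
            + 4 * (-(pdR U R θ * pdR A R θ) + pdT U R θ * pdT A R θ) := by
          field_simp at q2 ⊢
          linarith
        rw [s1, s2, pd_symm hU, pd_symm hA]
        simp only [hΦ', hN]
        field_simp
        ring
      simp only [heq]
      rw [intervalIntegral.integral_add (cΦ'.intervalIntegrable _ _) (cN.intervalIntegrable _ _),
        hint, zero_add]
      have hpi : (0:ℝ) ≤ 2 * π := by positivity
      have := intervalIntegral.integral_mono_on (μ := volume) hpi (cN.intervalIntegrable _ _)
        (intervalIntegrable_const (c := (0:ℝ))) (fun θ _ => hNle θ)
      simpa using this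
  exact ⟨anti, fun R hR => anti (Set.mem_Ici.mpr le_rfl) (Set.mem_Ici.mpr hR) hR⟩
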